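/- Let n ≥ 2 be an integer and K a field, and set m = ⌈log₂(n/2 + 1)⌉. If a map δ : M_n(K) → M_n(K) satisfies δ(xy) = δ(x)y + xδ(y) for all x, y in the union over 0 ≤ i ≤ m of the sets of rank-(n+1−2^i) matrices, then δ is a derivation of M_n(K). -/

import Mathlib

open Matrix

/-!
If the Leibniz rule holds for `(x, y)` and `(y, z)`, then it holds for `(x * y, z)` if and only if
it holds for `(x, y * z)`. The prescribed ranks are dense enough for every matrix to be a product
of two matrices of prescribed rank, so the rule extends to all pairs with an invertible member.
Subtracting an inner derivation makes `δ` vanish on the coordinate projections of corank one, and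
then on all coordinate projections. In a basis adapted to both `ker x` and `range y`, the pair
`(x, y)` becomes a pair of coordinate projections up to units, whence the Leibniz rule everywhere.
For matrices of size at least two, the full Leibniz rule forces additivity.
-/

section LeibnizRule

variable {A : Type*} [Ring A] {δ : A → A}

/-- The Leibniz rule for `δ` at one pair of elements; `δ` is not assumed to be additive. -/
def LeibnizAt (δ : A → A) (x y : A) : Prop :=
  δ (x * y) = δ x * y + x * δ y

theorem leibnizAt_mul_left_iff {x y z : A} (hxy : LeibnizAt δ x y) (hyz : LeibnizAt δ y z) :
    LeibnizAt δ (x * y) z ↔ LeibnizAt δ x (y * z) := by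
  rw [LeibnizAt] at hxy hyz
  simp only [LeibnizAt, hxy, hyz, mul_add, add_mul, mul_assoc, add_assoc]

theorem LeibnizAt.units_mul {x y : A} (hleft : ∀ (u : Aˣ) z, LeibnizAt δ u z)
    (hright : ∀ z (u : Aˣ), LeibnizAt δ z u) (hxy : LeibnizAt δ x y) (g h k : Aˣ) :
    LeibnizAt δ (g * x * ↑h⁻¹) (h * y * k) := by
  have hyk : LeibnizAt δ x (y * k) := (leibnizAt_mul_left_iff hxy (hright y k)).1 (hright _ k)
  have hcancel : LeibnizAt δ (x * ↑h⁻¹) (h * y * k) := by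
    refine (leibnizAt_mul_left_iff (hright x h⁻¹) (hleft h⁻¹ _)).2 ?_
    rwa [mul_assoc, Units.inv_mul_cancel_left]
  rw [mul_assoc]
  exact (leibnizAt_mul_left_iff (hleft g _) hcancel).2 (hleft g _)

theorem leibnizAt_sub_commutator_iff {s x y : A} :
    LeibnizAt (fun z => δ z - (z * s - s * z)) x y ↔ LeibnizAt δ x y := by
  simp only [LeibnizAt, ← sub_eq_zero (a := δ (x * y) - _), ← sub_eq_zero (a := δ (x * y))]
  refine Eq.congr_left ?_
  noncomm_ring

theorem LeibnizAt.map_eq_zero {e : A} (he : LeibnizAt δ e e) (hidem : IsIdempotentElem e)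
    (hleft : e * δ e = δ e) (hright : δ e * e = δ e) : δ e = 0 := by
  rw [LeibnizAt, hidem.eq, hleft, hright] at he
  exact left_eq_add.1 he

end LeibnizRule

section CoordinateProjection

variable {ι R : Type*} [DecidableEq ι] [Ring R]

variable (R) in
/-- The matrix of the projection onto the coordinates in `S` along the other coordinates. -/
def coordProj (S : Finset ι) : Matrix ι ι R :=
  diagonal fun i => if i ∈ S then 1 else 0

theorem coordProj_empty : coordProj R (∅ : Finset ι) = 0 := by
  simp [coordProj]

theorem coordProj_singleton (i : ι) : coordProj R {i} = single i i 1 := by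
  simp [coordProj, ← diagonal_single, Pi.single_apply]

variable [Fintype ι]

theorem coordProj_add_coordProj_compl (S : Finset ι) : coordProj R S + coordProj R Sᶜ = 1 := by
  rw [coordProj, coordProj, diagonal_add, ← diagonal_one]
  congr! with i
  by_cases hi : i ∈ S <;> simp [hi]

theorem coordProj_mul_apply (S : Finset ι) (x : Matrix ι ι R) (i j : ι) :
    (coordProj R S * x) i j = if i ∈ S then x i j else 0 := by
  simp [coordProj, diagonal_mul]

theorem mul_coordProj_apply (x : Matrix ι ι R) (S : Finset ι) (i j : ι) :
    (x * coordProj R S) i j = if j ∈ S then x i j else 0 := by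
  simp [coordProj, mul_diagonal]

theorem coordProj_mul_coordProj (S T : Finset ι) :
    coordProj R S * coordProj R T = coordProj R (S ∩ T) := by
  simp [coordProj, diagonal_mul_diagonal, ← ite_and, Finset.mem_inter, and_comm]

theorem isIdempotentElem_coordProj (S : Finset ι) : IsIdempotentElem (coordProj R S) := by
  rw [IsIdempotentElem, coordProj_mul_coordProj, Finset.inter_self]

variable {δ : Matrix ι ι R → Matrix ι ι R}

theorem exists_map_coordProj_compl_singleton_eq_commutator
    (hδ : ∀ i j, LeibnizAt δ (coordProj R {i}ᶜ) (coordProj R {j}ᶜ)) :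
    ∃ s, ∀ i, δ (coordProj R {i}ᶜ) = coordProj R {i}ᶜ * s - s * coordProj R {i}ᶜ := by
  have hblock : ∀ i a b, (a = i ↔ b = i) → δ (coordProj R {i}ᶜ) a b = 0 := by
    intro i a b hab
    have h := congrFun₂ (hδ i i) a b
    rw [coordProj_mul_coordProj, Finset.inter_self, Matrix.add_apply, mul_coordProj_apply,
      coordProj_mul_apply] at h
    by_cases hb : b = i <;> simpa [hab, hb] using h
  have hswap : ∀ i j, i ≠ j → δ (coordProj R {i}ᶜ) i j = -δ (coordProj R {j}ᶜ) i j := by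
    intro i j hij
    have hcomm : coordProj R {i}ᶜ * coordProj R {j}ᶜ = coordProj R {j}ᶜ * coordProj R {i}ᶜ := by
      rw [coordProj_mul_coordProj, coordProj_mul_coordProj, Finset.inter_comm]
    have h := congrFun₂ (((hδ i j).symm.trans (congrArg δ hcomm)).trans (hδ j i)) i j
    simp only [Matrix.add_apply, mul_coordProj_apply, coordProj_mul_apply, Finset.mem_compl,
      Finset.mem_singleton, hij, hij.symm] at h
    simpa [eq_neg_iff_add_eq_zero, add_comm] using h.symm
  refine ⟨of fun a b => δ (coordProj R {b}ᶜ) a b, fun i => ?_⟩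
  ext a b
  rw [Matrix.sub_apply, coordProj_mul_apply, mul_coordProj_apply]
  by_cases ha : a = i <;> by_cases hb : b = i
  · simp [ha, hb, hblock]
  · simpa [ha, hb] using hswap i b (Ne.symm hb)
  · simp [ha, hb]
  · simp [ha, hb, hblock]

theorem map_coordProj_eq_zero {S : Finset ι} (hS : LeibnizAt δ (coordProj R S) (coordProj R S))
    (hleft : ∀ i, LeibnizAt δ (coordProj R {i}ᶜ) (coordProj R S))
    (hright : ∀ i, LeibnizAt δ (coordProj R S) (coordProj R {i}ᶜ))
    (h0 : ∀ i, δ (coordProj R {i}ᶜ) = 0) : δ (coordProj R S) = 0 := by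
  have hrow : ∀ i ∉ S, ∀ j, δ (coordProj R S) i j = 0 := by
    intro i hi j
    have h := hleft i
    rw [LeibnizAt, coordProj_mul_coordProj, h0, zero_mul, zero_add,
      Finset.inter_eq_right.2 (by simpa using hi)] at h
    rw [h, coordProj_mul_apply, if_neg (by simp)]
  have hcol : ∀ j ∉ S, ∀ i, δ (coordProj R S) i j = 0 := by
    intro j hj i
    have h := hright j
    rw [LeibnizAt, coordProj_mul_coordProj, h0, mul_zero, add_zero,
      Finset.inter_eq_left.2 (by simpa using hj)] at h
    rw [h, mul_coordProj_apply, if_neg (by simp)]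
  refine hS.map_eq_zero (isIdempotentElem_coordProj S) ?_ ?_
  · ext i j
    by_cases hi : i ∈ S <;> simp [coordProj_mul_apply, hi, hrow]
  · ext i j
    by_cases hj : j ∈ S <;> simp [mul_coordProj_apply, hj, hcol]

end CoordinateProjection

section Additivity

variable {ι R : Type*} [DecidableEq ι] [Fintype ι] [Ring R] {δ : Matrix ι ι R → Matrix ι ι R}

theorem eq_of_forall_single_mul_eq {x y : Matrix ι ι R}
    (h : ∀ i, single i i 1 * x = single i i 1 * y) : x = y := by
  ext i j
  simpa using congrFun₂ (h i) i j

theorem map_add_of_forall_single_mul_eq_zero (hzero : δ 0 = 0)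
    (hδ : ∀ i x, δ (single i i 1 * x) = single i i 1 * δ x) {x y : Matrix ι ι R}
    (hxy : ∀ i, single i i 1 * x = 0 ∨ single i i 1 * y = 0) : δ (x + y) = δ x + δ y := by
  refine eq_of_forall_single_mul_eq fun i => ?_
  rw [mul_add, ← hδ, ← hδ, ← hδ, mul_add]
  rcases hxy i with hi | hi <;> simp [hi, hzero]

-- `eᵢ (x + y) = (eᵢ + eᵢⱼ) (eᵢ x + eⱼᵢ y)` for `j ≠ i`, and the two summands of the second factor
-- live in different rows.
theorem map_add_of_forall_leibnizAt [Nontrivial ι] (hδ : ∀ x y, LeibnizAt δ x y)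
    (h0 : ∀ i, δ (single i i 1) = 0) (x y : Matrix ι ι R) : δ (x + y) = δ x + δ y := by
  have hzero : δ 0 = 0 := by simpa [LeibnizAt] using hδ 0 0
  have hcomm : ∀ i z, δ (single i i 1 * z) = single i i 1 * δ z := by
    intro i z
    rw [hδ, h0, zero_mul, zero_add]
  refine eq_of_forall_single_mul_eq fun i => ?_
  obtain ⟨j, hji⟩ := exists_ne i
  let p : Matrix ι ι R := single i i 1 + single i j 1
  let u : Matrix ι ι R := single i i 1 * x
  let v : Matrix ι ι R := single j i 1 * y
  have hpu : p * u = single i i 1 * x := by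
    simp [p, u, ← mul_assoc, add_mul, hji]
  have hpv : p * v = single i i 1 * y := by
    simp [p, v, ← mul_assoc, add_mul, hji.symm]
  have huv : ∀ k, single k k 1 * u = 0 ∨ single k k 1 * v = 0 := by
    intro k
    rcases eq_or_ne k i with rfl | hk
    · exact .inr (by simp [v, ← mul_assoc, hji.symm])
    · exact .inl (by simp [u, ← mul_assoc, hk])
  calc single i i 1 * δ (x + y) = δ (p * (u + v)) := by rw [← hcomm, mul_add, mul_add, hpu, hpv]
    _ = δ p * (u + v) + p * (δ u + δ v) := by
      rw [hδ, map_add_of_forall_single_mul_eq_zero hzero hcomm huv]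
    _ = δ (p * u) + δ (p * v) := by rw [hδ p u, hδ p v, mul_add, mul_add]; abel
    _ = single i i 1 * (δ x + δ y) := by rw [hpu, hpv, hcomm, hcomm, mul_add]

end Additivity

section LinearAlgebra

open Module Submodule

variable {K V V' ι : Type*} [DivisionRing K] [AddCommGroup V] [Module K V] [AddCommGroup V']
  [Module K V']

theorem exists_basis_span_image_eq (b₀ : Basis ι K V) (N W : Submodule K V) :
    ∃ (b : Basis ι K V) (s t : Set ι), span K (b '' s) = N ∧ span K (b '' t) = W := by
  obtain ⟨u, huNW, -, hNWu, hu⟩ := exists_linearIndepOn_id_extension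
    (linearIndependent_empty K V) (Set.empty_subset ((N ⊓ W : Submodule K V) : Set V))
  obtain ⟨s, hsN, hus, hNs, hs⟩ := exists_linearIndepOn_id_extension hu
    (huNW.trans (SetLike.coe_subset_coe.2 inf_le_left))
  obtain ⟨t, htNW, hst, hNWt, ht⟩ := exists_linearIndepOn_id_extension hs
    (hsN.trans (Set.subset_union_left (t := (W : Set V))))
  have hspan_u : span K u = N ⊓ W := span_eq_of_le _ huNW hNWu
  have hspan_s : span K s = N := span_eq_of_le _ hsN hNs
  have hdiff : span K (t \ N) ≤ W := span_le.2 fun v hv => (htNW hv.1).resolve_left hv.2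
  have hW : W ≤ span K (t \ N) ⊔ N := by
    refine fun w hw => (span_le.2 fun v hv => ?_ : span K t ≤ _) (hNWt (.inr hw))
    by_cases hvN : v ∈ N
    · exact mem_sup_right hvN
    · exact mem_sup_left (subset_span ⟨hv, hvN⟩)
  have hspan_W : span K (u ∪ t \ N) = W := by
    calc span K (u ∪ t \ N) = span K (t \ N) ⊔ N ⊓ W := by rw [span_union, hspan_u, sup_comm]
      _ = (span K (t \ N) ⊔ N) ⊓ W := (sup_inf_assoc_of_le N hdiff).symm
      _ = W := inf_eq_right.2 hW
  let c := Basis.extend ht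
  let b := c.reindex (c.indexEquiv b₀)
  have hrange : t ⊆ Set.range b := by
    rw [c.range_reindex, Basis.range_extend]
    exact Basis.subset_extend ht
  refine ⟨b, b ⁻¹' s, b ⁻¹' (u ∪ t \ N), ?_, ?_⟩
  · rw [Set.image_preimage_eq_of_subset (hst.trans hrange), hspan_s]
  · rw [Set.image_preimage_eq_of_subset, hspan_W]
    exact Set.union_subset ((hus.trans hst).trans hrange) (Set.sdiff_subset.trans hrange)

theorem exists_linearEquiv_comp_eq_of_ker_eq [FiniteDimensional K V'] {f g : V →ₗ[K] V'}
    (h : LinearMap.ker f = LinearMap.ker g) : ∃ e : V' ≃ₗ[K] V', e ∘ₗ g = f := by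
  let φ : LinearMap.range g ≃ₗ[K] LinearMap.range f :=
    g.quotKerEquivRange.symm ≪≫ₗ quotEquivOfEq _ _ h.symm ≪≫ₗ f.quotKerEquivRange
  have hφ : ∀ v, (φ ⟨g v, LinearMap.mem_range_self g v⟩ : V') = f v := fun v => by
    simp only [φ, LinearEquiv.trans_apply]
    rw [g.quotKerEquivRange_symm_apply_image]
    rfl
  obtain ⟨e, he⟩ := exists_linearEquiv_restrict_eq φ
  exact ⟨e, LinearMap.ext fun v => (he _).symm.trans (hφ v)⟩

theorem exists_linearEquiv_comp_eq_of_range_eq [FiniteDimensional K V] {f g : V →ₗ[K] V'}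
    (h : LinearMap.range f = LinearMap.range g) : ∃ e : V ≃ₗ[K] V, g ∘ₗ e = f := by
  obtain ⟨C, hC⟩ := (LinearMap.ker f).exists_isCompl
  obtain ⟨D, hD⟩ := (LinearMap.ker g).exists_isCompl
  let φf := f.kerComplementEquivRange hC.symm
  let φg := g.kerComplementEquivRange hD.symm
  let φ : C ≃ₗ[K] D := φf ≪≫ₗ LinearEquiv.ofEq _ _ h ≪≫ₗ φg.symm
  have hφ : ∀ v, g (φ v) = f v := fun v =>
    congrArg Subtype.val (φg.apply_symm_apply (LinearEquiv.ofEq _ _ h (φf v)))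
  let ψ : LinearMap.ker f ≃ₗ[K] LinearMap.ker g := LinearEquiv.ofFinrankEq _ _ <| by
    have hf := f.finrank_range_add_finrank_ker
    have hg := g.finrank_range_add_finrank_ker
    rw [h] at hf
    omega
  refine ⟨(prodEquivOfIsCompl _ _ hC).symm ≪≫ₗ ψ.prodCongr φ ≪≫ₗ prodEquivOfIsCompl _ _ hD, ?_⟩
  ext v
  obtain ⟨w, rfl⟩ := (prodEquivOfIsCompl _ _ hC).surjective v
  simp [hφ]

end LinearAlgebra

section UnitMatrix

variable {ι R : Type*} [DecidableEq ι] [Fintype ι] [CommRing R]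

theorem exists_unit_mulVecLin_eq (e : (ι → R) ≃ₗ[R] (ι → R)) :
    ∃ u : (Matrix ι ι R)ˣ, (u : Matrix ι ι R).mulVecLin = e :=
  ⟨⟨LinearMap.toMatrix' e, LinearMap.toMatrix' e.symm,
    by rw [← LinearMap.toMatrix'_comp]; simp, by rw [← LinearMap.toMatrix'_comp]; simp⟩,
    by rw [← Matrix.toLin'_apply', Matrix.toLin'_toMatrix']⟩

theorem exists_unit_col_eq (b : Module.Basis ι R (ι → R)) :
    ∃ h : (Matrix ι ι R)ˣ, (h : Matrix ι ι R).col = b :=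
  ⟨⟨(Pi.basisFun R ι).toMatrix b, b.toMatrix (Pi.basisFun R ι),
    Module.Basis.toMatrix_mul_toMatrix_flip _ _, Module.Basis.toMatrix_mul_toMatrix_flip _ _⟩,
    by ext; simp [Module.Basis.toMatrix_apply]⟩

theorem rank_units_mul (u : (Matrix ι ι R)ˣ) (x : Matrix ι ι R) :
    ((u : Matrix ι ι R) * x).rank = x.rank :=
  rank_mul_eq_right_of_isUnit_det _ _ ((isUnit_iff_isUnit_det _).1 u.isUnit)

theorem rank_mul_units (x : Matrix ι ι R) (u : (Matrix ι ι R)ˣ) :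
    (x * (u : Matrix ι ι R)).rank = x.rank :=
  rank_mul_eq_left_of_isUnit_det _ _ ((isUnit_iff_isUnit_det _).1 u.isUnit)

theorem range_mulVecLin_mul_coordProj (x : Matrix ι ι R) (S : Finset ι) :
    LinearMap.range (x * coordProj R S).mulVecLin = Submodule.span R (x.col '' S) := by
  rw [range_mulVecLin]
  refine le_antisymm (Submodule.span_le.2 ?_) (Submodule.span_mono ?_)
  · rintro _ ⟨j, rfl⟩
    by_cases hj : j ∈ S
    · exact Submodule.subset_span ⟨j, hj, by ext i; simp [mul_coordProj_apply, hj]⟩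
    · have hzero : (x * coordProj R S).col j = 0 := by ext i; simp [mul_coordProj_apply, hj]
      exact hzero ▸ Submodule.zero_mem _
  · rintro _ ⟨j, hj, rfl⟩
    exact ⟨j, by ext i; simp_all [mul_coordProj_apply]⟩

theorem ker_mulVecLin_eq_range_mulVecLin {a b c d : Matrix ι ι R} (hab : a * b = 0)
    (hsum : b * c + d * a = 1) : LinearMap.ker a.mulVecLin = LinearMap.range b.mulVecLin := by
  ext v
  simp only [LinearMap.mem_ker, LinearMap.mem_range, mulVecLin_apply]
  constructor
  · intro hv
    refine ⟨c *ᵥ v, ?_⟩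
    calc b *ᵥ (c *ᵥ v) = (b * c + d * a) *ᵥ v := by
          rw [add_mulVec, ← mulVec_mulVec v d a, hv, mulVec_zero, add_zero, mulVec_mulVec]
      _ = v := by rw [hsum, one_mulVec]
  · rintro ⟨w, rfl⟩
    rw [mulVec_mulVec, hab, zero_mulVec]

theorem ker_mulVecLin_coordProj_compl_mul (h : (Matrix ι ι R)ˣ) (S : Finset ι) :
    LinearMap.ker (coordProj R Sᶜ * (↑h⁻¹ : Matrix ι ι R)).mulVecLin =
      LinearMap.range ((h : Matrix ι ι R) * coordProj R S).mulVecLin := by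
  refine ker_mulVecLin_eq_range_mulVecLin (c := ↑h⁻¹) (d := h) ?_ ?_
  · rw [mul_assoc, Units.inv_mul_cancel_left, coordProj_mul_coordProj, Finset.inter_comm,
      Finset.inter_compl, coordProj_empty]
  · rw [← mul_assoc, ← add_mul, ← mul_add, coordProj_add_coordProj_compl, mul_one, Units.mul_inv]

end UnitMatrix

section NormalForm

variable {ι K : Type*} [DecidableEq ι] [Fintype ι] [Field K]

theorem exists_eq_unit_mul_of_ker_eq {x y : Matrix ι ι K}
    (h : LinearMap.ker x.mulVecLin = LinearMap.ker y.mulVecLin) :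
    ∃ g : (Matrix ι ι K)ˣ, x = g * y := by
  obtain ⟨e, he⟩ := exists_linearEquiv_comp_eq_of_ker_eq h
  obtain ⟨g, hg⟩ := exists_unit_mulVecLin_eq e
  exact ⟨g, toLin'.injective (by simp only [toLin'_apply', mulVecLin_mul, hg, he])⟩

theorem exists_eq_mul_unit_of_range_eq {x y : Matrix ι ι K}
    (h : LinearMap.range x.mulVecLin = LinearMap.range y.mulVecLin) :
    ∃ k : (Matrix ι ι K)ˣ, x = y * k := by
  obtain ⟨e, he⟩ := exists_linearEquiv_comp_eq_of_range_eq h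
  obtain ⟨k, hk⟩ := exists_unit_mulVecLin_eq e
  exact ⟨k, toLin'.injective (by simp only [toLin'_apply', mulVecLin_mul, hk, he])⟩

theorem exists_units_mul_coordProj_mul (x y : Matrix ι ι K) :
    ∃ (g h k : (Matrix ι ι K)ˣ) (S T : Finset ι),
      x = g * coordProj K S * (↑h⁻¹ : Matrix ι ι K) ∧ y = h * coordProj K T * k := by
  classical
  obtain ⟨b, s, t, hs, ht⟩ := exists_basis_span_image_eq (Pi.basisFun K ι)
    (LinearMap.ker x.mulVecLin) (LinearMap.range y.mulVecLin)
  obtain ⟨h, hb⟩ := exists_unit_col_eq b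
  obtain ⟨g, hg⟩ := exists_eq_unit_mul_of_ker_eq (x := x)
    (y := coordProj K s.toFinsetᶜ * (↑h⁻¹ : Matrix ι ι K)) <| by
      rw [ker_mulVecLin_coordProj_compl_mul, range_mulVecLin_mul_coordProj, hb, Set.coe_toFinset,
        hs]
  obtain ⟨k, hk⟩ := exists_eq_mul_unit_of_range_eq (x := y) (y := h * coordProj K t.toFinset) <| by
    rw [range_mulVecLin_mul_coordProj, hb, Set.coe_toFinset, ht]
  exact ⟨g, h, k, _, _, by rw [mul_assoc, ← hg], hk⟩

theorem rank_coordProj (S : Finset ι) : (coordProj K S).rank = S.card := by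
  classical
  rw [coordProj, rank_diagonal, Fintype.card_subtype]
  simp

theorem exists_card_eq_inter_eq {S : Finset ι} {s : ℕ} (hle : S.card ≤ s)
    (hs : 2 * s ≤ Fintype.card ι + S.card) :
    ∃ T U : Finset ι, T.card = s ∧ U.card = s ∧ T ∩ U = S := by
  obtain ⟨T, hST, -, hT⟩ := Finset.exists_subsuperset_card_eq (Finset.subset_univ S) hle
    (by rw [Finset.card_univ]; omega)
  have hdisj : Disjoint S Tᶜ := disjoint_compl_right.mono_left hST
  obtain ⟨U, hSU, hUT, hU⟩ := Finset.exists_subsuperset_card_eq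
    (Finset.subset_union_left : S ⊆ S ∪ Tᶜ) hle
    (by rw [Finset.card_union_of_disjoint hdisj, Finset.card_compl]; omega)
  refine ⟨T, U, hT, hU, Finset.Subset.antisymm (fun i hi => ?_) (Finset.subset_inter hST hSU)⟩
  obtain ⟨hiT, hiU⟩ := Finset.mem_inter.1 hi
  simpa [hiT] using hUT hiU

end NormalForm

theorem exists_rank_eq_mul_eq {ι K : Type*} [Fintype ι] [Field K] {x : Matrix ι ι K} {s : ℕ}
    (hle : x.rank ≤ s) (hs : 2 * s ≤ Fintype.card ι + x.rank) :
    ∃ a b : Matrix ι ι K, a.rank = s ∧ b.rank = s ∧ a * b = x := by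
  classical
  obtain ⟨-, h, k, -, S, -, rfl⟩ := exists_units_mul_coordProj_mul x x
  rw [rank_mul_units, rank_units_mul, rank_coordProj] at hle hs
  obtain ⟨T, U, hT, hU, rfl⟩ := exists_card_eq_inter_eq hle hs
  refine ⟨h * coordProj K T, coordProj K U * k, ?_, ?_, ?_⟩
  · rw [rank_units_mul, rank_coordProj, hT]
  · rw [rank_mul_units, rank_coordProj, hU]
  · rw [← coordProj_mul_coordProj]
    simp only [mul_assoc]

section Extension

variable {ι K : Type*} [Fintype ι] [DecidableEq ι] [Field K] {δ : Matrix ι ι K → Matrix ι ι K}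

theorem leibnizAt_of_forall_unit (hleft : ∀ (u : (Matrix ι ι K)ˣ) z, LeibnizAt δ u z)
    (hright : ∀ z (u : (Matrix ι ι K)ˣ), LeibnizAt δ z u) (h0 : ∀ S, δ (coordProj K S) = 0)
    (x y : Matrix ι ι K) : LeibnizAt δ x y := by
  obtain ⟨g, h, k, S, T, rfl, rfl⟩ := exists_units_mul_coordProj_mul x y
  refine LeibnizAt.units_mul hleft hright ?_ g h k
  rw [LeibnizAt, coordProj_mul_coordProj, h0, h0, h0, zero_mul, mul_zero, add_zero]

variable {R : Set ℕ}

theorem rank_coordProj_compl_singleton_mem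
    (hR : ∀ r ≤ Fintype.card ι, ∃ s ∈ R, r ≤ s ∧ 2 * s ≤ Fintype.card ι + r) (i : ι) :
    (coordProj K {i}ᶜ).rank ∈ R := by
  have hpos : 0 < Fintype.card ι := Fintype.card_pos_iff.2 ⟨i⟩
  obtain ⟨s, hs, hle, hge⟩ := hR (Fintype.card ι - 1) (Nat.sub_le _ _)
  rw [rank_coordProj, Finset.card_compl, Finset.card_singleton]
  rwa [show Fintype.card ι - 1 = s by omega]

theorem map_coordProj_eq_zero_of_rank_mem
    (hR : ∀ r ≤ Fintype.card ι, ∃ s ∈ R, r ≤ s ∧ 2 * s ≤ Fintype.card ι + r)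
    (hδ : ∀ x y : Matrix ι ι K, x.rank ∈ R → y.rank ∈ R → LeibnizAt δ x y)
    (h0 : ∀ i, δ (coordProj K {i}ᶜ) = 0) (S : Finset ι) : δ (coordProj K S) = 0 := by
  have hcorank (i : ι) : (coordProj K {i}ᶜ).rank ∈ R := rank_coordProj_compl_singleton_mem hR i
  have hmem (T : Finset ι) (hT : T.card ∈ R) : δ (coordProj K T) = 0 := by
    rw [← rank_coordProj (K := K)] at hT
    exact map_coordProj_eq_zero (hδ _ _ hT hT) (fun i => hδ _ _ (hcorank i) hT)
      (fun i => hδ _ _ hT (hcorank i)) h0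
  obtain ⟨s, hs, hle, hge⟩ := hR S.card S.card_le_univ
  obtain ⟨T, U, rfl, hU, rfl⟩ := exists_card_eq_inter_eq hle hge
  have hTU : LeibnizAt δ (coordProj K T) (coordProj K U) :=
    hδ _ _ (by rwa [rank_coordProj]) (by rwa [rank_coordProj, hU])
  rw [← coordProj_mul_coordProj, hTU, hmem T hs, hmem U (hU ▸ hs), zero_mul, mul_zero, add_zero]

theorem leibnizAt_of_rank_mem
    (hR : ∀ r ≤ Fintype.card ι, ∃ s ∈ R, r ≤ s ∧ 2 * s ≤ Fintype.card ι + r)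
    (hδ : ∀ x y : Matrix ι ι K, x.rank ∈ R → y.rank ∈ R → LeibnizAt δ x y)
    (h0 : ∀ i, δ (coordProj K {i}ᶜ) = 0) (x y : Matrix ι ι K) : LeibnizAt δ x y := by
  have hfactor (z : Matrix ι ι K) : ∃ a b : Matrix ι ι K, a.rank ∈ R ∧ b.rank ∈ R ∧ a * b = z := by
    obtain ⟨s, hs, hle, hge⟩ := hR z.rank z.rank_le_card_width
    obtain ⟨a, b, ha, hb, hab⟩ := exists_rank_eq_mul_eq hle hge
    exact ⟨a, b, ha ▸ hs, hb ▸ hs, hab⟩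
  have hunit (u : (Matrix ι ι K)ˣ) : (u : Matrix ι ι K).rank ∈ R := by
    obtain ⟨s, hs, hle, hge⟩ := hR (Fintype.card ι) le_rfl
    rwa [rank_unit, show Fintype.card ι = s by omega]
  refine leibnizAt_of_forall_unit (fun u z => ?_) (fun z u => ?_)
    (map_coordProj_eq_zero_of_rank_mem hR hδ h0) x y
  · obtain ⟨a, b, ha, hb, rfl⟩ := hfactor z
    exact (leibnizAt_mul_left_iff (hδ _ _ (hunit u) ha) (hδ a b ha hb)).1
      (hδ _ _ (by rwa [rank_units_mul]) hb)
  · obtain ⟨a, b, ha, hb, rfl⟩ := hfactor z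
    exact (leibnizAt_mul_left_iff (hδ a b ha hb) (hδ _ _ hb (hunit u))).2
      (hδ _ _ ha (by rwa [rank_mul_units]))

end Extension

theorem add_two_le_two_pow_of_eq_ceil_logb {n m : ℕ}
    (hm : (m : ℤ) = ⌈Real.logb 2 ((n : ℝ) / 2 + 1)⌉) : n + 2 ≤ 2 ^ (m + 1) := by
  have hle : Real.logb 2 ((n : ℝ) / 2 + 1) ≤ (m : ℝ) := by
    exact_mod_cast hm ▸ Int.le_ceil (Real.logb 2 ((n : ℝ) / 2 + 1))
  rw [Real.logb_le_iff_le_rpow one_lt_two (by positivity), Real.rpow_natCast] at hle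
  have h : (n : ℝ) + 2 ≤ 2 ^ (m + 1) := by
    rw [pow_succ]
    linarith
  exact_mod_cast h

theorem exists_le_add_one_sub_two_pow {n m r : ℕ} (hm : n + 2 ≤ 2 ^ (m + 1)) (hr : r ≤ n) :
    ∃ i ≤ m, r ≤ n + 1 - 2 ^ i ∧ 2 * (n + 1 - 2 ^ i) ≤ n + r := by
  have hlow : 2 ^ Nat.log 2 (n - r + 1) ≤ n - r + 1 := Nat.pow_log_le_self 2 (by omega)
  have hupp : n - r + 1 < 2 ^ (Nat.log 2 (n - r + 1) + 1) := Nat.lt_pow_succ_log_self one_lt_two _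
  have hlog : Nat.log 2 (n - r + 1) < m + 1 := Nat.log_lt_of_lt_pow (by omega) (by omega)
  rw [pow_succ] at hupp
  exact ⟨_, Nat.lt_succ_iff.1 hlog, by omega, by omega⟩

theorem stmt_16_general {ι K : Type*} [Fintype ι] [Nontrivial ι] [Field K]
    {R : Set ℕ} (hR : ∀ r ≤ Fintype.card ι, ∃ s ∈ R, r ≤ s ∧ 2 * s ≤ Fintype.card ι + r)
    (δ : Matrix ι ι K → Matrix ι ι K)
    (hδ : ∀ x y : Matrix ι ι K, x.rank ∈ R → y.rank ∈ R → δ (x * y) = δ x * y + x * δ y) :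
    (∀ x y : Matrix ι ι K, δ (x + y) = δ x + δ y) ∧
    (∀ x y : Matrix ι ι K, δ (x * y) = δ x * y + x * δ y) := by
  classical
  have hcorank (i : ι) : (coordProj K {i}ᶜ).rank ∈ R := rank_coordProj_compl_singleton_mem hR i
  obtain ⟨s, hs⟩ := exists_map_coordProj_compl_singleton_eq_commutator
    fun i j => hδ _ _ (hcorank i) (hcorank j)
  let δ' : Matrix ι ι K → Matrix ι ι K := fun z => δ z - (z * s - s * z)
  have hδ' : ∀ x y : Matrix ι ι K, x.rank ∈ R → y.rank ∈ R → LeibnizAt δ' x y :=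
    fun x y hx hy => leibnizAt_sub_commutator_iff.2 (hδ x y hx hy)
  have h0 : ∀ i, δ' (coordProj K {i}ᶜ) = 0 := fun i => by simp only [δ', hs, sub_self]
  have hmul : ∀ x y, LeibnizAt δ' x y := leibnizAt_of_rank_mem hR hδ' h0
  have hadd : ∀ x y, δ' (x + y) = δ' x + δ' y := map_add_of_forall_leibnizAt hmul fun i => by
    rw [← coordProj_singleton, map_coordProj_eq_zero_of_rank_mem hR hδ' h0]
  refine ⟨fun x y => ?_, fun x y => leibnizAt_sub_commutator_iff.1 (hmul x y)⟩
  have h := hadd x y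
  simp only [δ', sub_eq_iff_eq_add] at h
  rw [h]
  noncomm_ring

theorem stmt_16 {n : ℕ} (K : Type*) [Field K]
    (hn : 2 ≤ n) (m : ℕ) (hm : (m : ℤ) = ⌈Real.logb 2 ((n : ℝ) / 2 + 1)⌉)
    (δ : Matrix (Fin n) (Fin n) K → Matrix (Fin n) (Fin n) K)
    (hδ : ∀ x y : Matrix (Fin n) (Fin n) K,
      (∃ i ≤ m, x.rank = n + 1 - 2 ^ i) → (∃ i ≤ m, y.rank = n + 1 - 2 ^ i) →
      δ (x * y) = δ x * y + x * δ y) :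
    (∀ x y : Matrix (Fin n) (Fin n) K, δ (x + y) = δ x + δ y) ∧
    (∀ x y : Matrix (Fin n) (Fin n) K, δ (x * y) = δ x * y + x * δ y) := by
  have : Nontrivial (Fin n) := Fin.nontrivial_iff_two_le.2 hn
  refine stmt_16_general (R := {r | ∃ i ≤ m, r = n + 1 - 2 ^ i}) (fun r hr => ?_) δ hδ
  simpa using exists_le_add_one_sub_two_pow (add_two_le_two_pow_of_eq_ceil_logb hm)
    (by simpa using hr)
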